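/- Consider a finite-horizon sequential decision making problem with observation space O, action space A, horizon H, and conditional probabilities P(o_{1:H} | a_{1:H}). For h ∈ {0,...,H−1}, let D_h be the system-dynamics matrix with rows indexed by futures ω_h ∈ (O×A)^{H−h} and columns indexed by histories τ_h ∈ (O×A)^h, with entry D_h[ω_h, τ_h] = P̄(τ_h, ω_h), the joint conditional probability of observing the full observation sequence given the full action sequence of (τ_h, ω_h). Suppose rank(D_h) = r_h for all h. Then there exist a scalar b₀ with |b₀| ≤ √(A^H), matrices B_h(o,a) ∈ ℝ^{r_h × r_{h−1}} with spectral norm ‖B_h(o,a)‖₂ ≤ 1, and vectors υ_h ∈ ℝ^{r_h} with ‖υ_h‖₂ ≤ √((O/A)^{H−h}), such that: (a) for all h, a: υ_hᵀ · Σ_o B_h(o,a) = υ_{h−1}ᵀ; and (b) for all histories τ_h = (o_{1:h}, a_{1:h}): P(o_{1:h} | a_{1:h}) = υ_hᵀ B_h(o_h,a_h) ⋯ B_1(o_1,a_1) b₀. -/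

import Mathlib

open Matrix

/-- Splice a history (coordinates `< h`) with a future (coordinates `≥ h`). -/
def splice {H : ℕ} {β : Type*} (h : ℕ) (hist fut : Fin H → β) : Fin H → β :=
  fun i => if (i : ℕ) < h then hist i else fut i

/-- The system-dynamics matrix `D_h` of a sequential decision making problem: rows are
indexed by futures, columns by histories (both encoded as full trajectories, of which
only the relevant coordinates matter), with entry `P̄(τ_h, ω_h)`. -/
noncomputable def sysDyn {O A H : ℕ}
    (p : (Fin H → Fin O) → (Fin H → Fin A) → ℝ) (h : ℕ) :
    Matrix ((Fin H → Fin O) × (Fin H → Fin A)) ((Fin H → Fin O) × (Fin H → Fin A)) ℝ :=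
  Matrix.of fun fut hist => p (splice h hist.1 fut.1) (splice h hist.2 fut.2)

/-- The marginal conditional probability `P(o_{1:h} | a_{1:h})`: sum of `p` over all
completions of the first `h` observations. -/
noncomputable def marg {O A H : ℕ}
    (p : (Fin H → Fin O) → (Fin H → Fin A) → ℝ) (h : ℕ)
    (o : ℕ → Fin O) (a : ℕ → Fin A) : ℝ :=
  ∑ o' : Fin H → Fin O,
    if (∀ i : Fin H, (i : ℕ) < h → o' i = o i) then p o' (fun i => a i) else 0

/-- The operator chain `B_h(o_h,a_h) ⋯ B_1(o_1,a_1) b₀` applied along a trajectory. -/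
noncomputable def chain {O A : ℕ} (r : ℕ → ℕ)
    (B : (h : ℕ) → Fin O → Fin A → Matrix (Fin (r (h + 1))) (Fin (r h)) ℝ)
    (b₀ : ℝ) (o : ℕ → Fin O) (a : ℕ → Fin A) : (h : ℕ) → Fin (r h) → ℝ
  | 0 => fun _ => b₀
  | h + 1 => (B h (o h) (a h)).mulVec (chain r B b₀ o a h)


/-- Set coordinate `h`. -/
def upd {H : ℕ} {β : Type*} (h : ℕ) (b : β) (t : Fin H → β) : Fin H → β :=
  fun i => if (i : ℕ) = h then b else t i

lemma upd_eq {H : ℕ} {β : Type*} {h : ℕ} (hh : h < H) (b : β) (t : Fin H → β) :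
    upd h b t = Function.update t ⟨h, hh⟩ b := by
  funext i
  simp [upd, Function.update_apply, Fin.ext_iff]

lemma sum_upd {H : ℕ} {β : Type*} [Fintype β] [DecidableEq β] {h : ℕ} (hh : h < H) (b : β)
    (G : (Fin H → β) → ℝ) :
    ∑ t, G (upd h b t) = Fintype.card β * ∑ t : Fin H → β, if t ⟨h, hh⟩ = b then G t else 0 := by
  have e := (Equiv.funSplitAt (⟨h, hh⟩ : Fin H) β).symm
  rw [← (Equiv.funSplitAt (⟨h, hh⟩ : Fin H) β).symm.sum_comp,
    ← (Equiv.funSplitAt (⟨h, hh⟩ : Fin H) β).symm.sum_comp, Fintype.sum_prod_type,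
    Fintype.sum_prod_type]
  have h1 : ∀ (x : β) (y : {j : Fin H // j ≠ ⟨h, hh⟩} → β),
      upd h b ((Equiv.funSplitAt (⟨h, hh⟩ : Fin H) β).symm (x, y)) =
      (Equiv.funSplitAt (⟨h, hh⟩ : Fin H) β).symm (b, y) := by
    intro x y
    funext i
    by_cases hi : (i : ℕ) = h
    · have : i = ⟨h, hh⟩ := Fin.ext hi
      subst this
      simp [upd, Equiv.funSplitAt, Equiv.piSplitAt]
    · have : i ≠ ⟨h, hh⟩ := fun h' => hi (by simp [h'])
      simp [upd, Equiv.funSplitAt, Equiv.piSplitAt, hi, this]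
  have h2 : ∀ (x : β) (y : {j : Fin H // j ≠ ⟨h, hh⟩} → β),
      (Equiv.funSplitAt (⟨h, hh⟩ : Fin H) β).symm (x, y) ⟨h, hh⟩ = x := by
    intro x y
    simp [Equiv.funSplitAt, Equiv.piSplitAt]
  simp only [h1, h2]
  rw [Finset.sum_const, Finset.card_univ, nsmul_eq_mul]
  congr 1
  rw [Finset.sum_comm]
  simp

lemma sum_upd_le {H : ℕ} {β : Type*} [Fintype β] [DecidableEq β] {h : ℕ} (hh : h < H) (b : β)
    (G : (Fin H → β) → ℝ) (hG : ∀ t, 0 ≤ G t) :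
    ∑ t, G (upd h b t) ≤ Fintype.card β * ∑ t : Fin H → β, G t := by
  rw [sum_upd hh]
  gcongr with t
  split_ifs
  · exact le_rfl
  · exact hG t

lemma splice_zero {H : ℕ} {β : Type*} (τ t : Fin H → β) : splice 0 τ t = t := by
  funext i
  simp [splice]

lemma sum_splice {H : ℕ} {β : Type*} [Fintype β] [DecidableEq β] (τ : Fin H → β) :
    ∀ (h : ℕ), h ≤ H → ∀ (F : (Fin H → β) → ℝ),
    ∑ t, F (splice h τ t) = (Fintype.card β : ℝ) ^ h *
      ∑ t : Fin H → β, if (∀ i : Fin H, (i : ℕ) < h → t i = τ i) then F t else 0 := by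
  intro h
  induction h with
  | zero => intro _ F; simp [splice_zero]
  | succ h ih =>
    intro hh F
    have hh' : h < H := hh
    have h1 : ∀ t, splice (h + 1) τ t = splice h τ (upd h (τ ⟨h, hh'⟩) t) := by
      intro t
      funext i
      simp only [splice, upd]
      by_cases hi : (i : ℕ) = h
      · have : i = ⟨h, hh'⟩ := Fin.ext hi
        subst this
        simp
      · by_cases h2 : (i : ℕ) < h
        · simp [h2, Nat.lt_succ_of_lt h2]
        · have : ¬ (i : ℕ) < h + 1 := by omega
          simp [h2, this, hi]
    simp only [h1]
    rw [sum_upd hh' (τ ⟨h, hh'⟩) (fun t => F (splice h τ t))]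
    have h3 : ∀ t : Fin H → β, (if t ⟨h, hh'⟩ = τ ⟨h, hh'⟩ then F (splice h τ t) else 0) =
        (fun s : Fin H → β => if s ⟨h, hh'⟩ = τ ⟨h, hh'⟩ then F s else 0) (splice h τ t) := by
      intro t
      simp [splice]
    rw [Finset.sum_congr rfl (fun t _ => h3 t), ih (by omega)
      (fun s : Fin H → β => if s ⟨h, hh'⟩ = τ ⟨h, hh'⟩ then F s else 0), pow_succ, ← mul_assoc,
      mul_comm (Fintype.card β : ℝ)]
    congr 1
    refine Finset.sum_congr rfl fun t _ => ?_
    rw [← ite_and]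
    refine if_congr ?_ rfl rfl
    constructor
    · rintro ⟨ha, hb⟩ i hi
      rcases Nat.lt_succ_iff_lt_or_eq.mp hi with h' | h'
      · exact ha i h'
      · have : i = ⟨h, hh'⟩ := Fin.ext h'
        rw [this, hb]
    · intro ha
      exact ⟨fun i hi => ha i (by omega), ha _ (by simp)⟩

/-- Marginal on trajectories indexed by `Fin H`. -/
noncomputable def margF {O A H : ℕ} (p : (Fin H → Fin O) → (Fin H → Fin A) → ℝ) (h : ℕ)
    (o : Fin H → Fin O) (a : Fin H → Fin A) : ℝ :=
  ∑ o' : Fin H → Fin O, if (∀ i : Fin H, (i : ℕ) < h → o' i = o i) then p o' a else 0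

lemma margF_causal {O A H : ℕ} (hO : 0 < O) (hA : 0 < A)
    (p : (Fin H → Fin O) → (Fin H → Fin A) → ℝ)
    (hcausal : ∀ h ≤ H, ∀ (o : ℕ → Fin O) (a a' : ℕ → Fin A),
      (∀ i, i < h → a i = a' i) → marg p h o a = marg p h o a')
    (h : ℕ) (hh : h ≤ H) (o : Fin H → Fin O) (a a' : Fin H → Fin A)
    (haa : ∀ i : Fin H, (i : ℕ) < h → a i = a' i) : margF p h o a = margF p h o a' := by
  have := hcausal h hh (fun i => if hi : i < H then o ⟨i, hi⟩ else ⟨0, hO⟩)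
    (fun i => if hi : i < H then a ⟨i, hi⟩ else ⟨0, hA⟩)
    (fun i => if hi : i < H then a' ⟨i, hi⟩ else ⟨0, hA⟩) (by
      intro i hi
      have : i < H := by omega
      simp only [this, dif_pos]
      exact haa _ hi)
  simpa [marg, margF] using this

lemma sum_col {O A H : ℕ} (hO : 0 < O) (hA : 0 < A)
    (p : (Fin H → Fin O) → (Fin H → Fin A) → ℝ)
    (hcausal : ∀ h ≤ H, ∀ (o : ℕ → Fin O) (a a' : ℕ → Fin A),
      (∀ i, i < h → a i = a' i) → marg p h o a = marg p h o a')
    (h : ℕ) (hh : h ≤ H) (τ : (Fin H → Fin O) × (Fin H → Fin A)) :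
    ∑ t, sysDyn p h t τ = (A : ℝ) ^ H * (O : ℝ) ^ h * margF p h τ.1 τ.2 := by
  rw [Fintype.sum_prod_type_right]
  have : ∀ y : Fin H → Fin A, ∑ x, sysDyn p h (x, y) τ = (O : ℝ) ^ h * margF p h τ.1 τ.2 := by
    intro y
    have := sum_splice τ.1 h hh (fun s => p s (splice h τ.2 y))
    simp only [sysDyn, Matrix.of_apply]
    rw [this, Fintype.card_fin]
    congr 1
    exact margF_causal hO hA p hcausal h hh τ.1 _ _ (by intro i hi; simp [splice, hi])
  simp only [this]
  simp [mul_assoc]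

lemma sum_margF {O A H : ℕ} (p : (Fin H → Fin O) → (Fin H → Fin A) → ℝ)
    (h : ℕ) (hh : h < H) (o : Fin H → Fin O) (a : Fin H → Fin A) :
    ∑ b, margF p (h + 1) (upd h b o) a = margF p h o a := by
  unfold margF
  rw [Finset.sum_comm]
  refine Finset.sum_congr rfl fun t _ => ?_
  have : ∀ b, (∀ i : Fin H, (i : ℕ) < h + 1 → t i = upd h b o i) ↔
      (t ⟨h, hh⟩ = b ∧ ∀ i : Fin H, (i : ℕ) < h → t i = o i) := by
    intro b
    constructor
    · intro H1
      refine ⟨by simpa [upd] using H1 ⟨h, hh⟩ (by simp), fun i hi => ?_⟩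
      have := H1 i (by omega)
      rwa [upd, if_neg (by omega)] at this
    · rintro ⟨h1, h2⟩ i hi
      rcases Nat.lt_succ_iff_lt_or_eq.mp hi with h' | h'
      · rw [upd, if_neg (by omega), h2 i h']
      · have : i = ⟨h, hh⟩ := Fin.ext h'
        subst this
        simp [upd, h1]
  simp only [this, ite_and]
  simp

/-- Transition on futures. -/
def updP {O A H : ℕ} (h : ℕ) (o : Fin O) (a : Fin A) (t : (Fin H → Fin O) × (Fin H → Fin A)) :
    (Fin H → Fin O) × (Fin H → Fin A) := (upd h o t.1, upd h a t.2)

lemma splice_upd {H : ℕ} {β : Type*} (h : ℕ) (b : β) (τ t : Fin H → β) :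
    splice h τ (upd h b t) = splice (h + 1) (upd h b τ) t := by
  funext i
  simp only [splice, upd]
  split_ifs <;> first | rfl | omega

lemma sysDyn_upd {O A H : ℕ} (p : (Fin H → Fin O) → (Fin H → Fin A) → ℝ) (h : ℕ)
    (o : Fin O) (a : Fin A) (t τ : (Fin H → Fin O) × (Fin H → Fin A)) :
    sysDyn p h (updP h o a t) τ = sysDyn p (h + 1) t (updP h o a τ) := by
  simp [sysDyn, updP, splice_upd]

lemma range_upd {O A H : ℕ} (p : (Fin H → Fin O) → (Fin H → Fin A) → ℝ) (h : ℕ)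
    (o : Fin O) (a : Fin A) (y : (Fin H → Fin O) × (Fin H → Fin A) → ℝ) :
    ∃ z, (fun t => (sysDyn p h *ᵥ y) (updP h o a t)) = sysDyn p (h + 1) *ᵥ z := by
  refine ⟨∑ τ, y τ • Pi.single (updP h o a τ) 1, ?_⟩
  funext t
  rw [Matrix.mulVec_sum, Finset.sum_apply]
  simp only [Matrix.mulVec_smul, Matrix.mulVec_single_one, Pi.smul_apply, Matrix.col_apply,
    smul_eq_mul]
  simp only [Matrix.mulVec, dotProduct, sysDyn_upd]
  exact Finset.sum_congr rfl fun _ _ => mul_comm _ _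

lemma sum_updP_le {O A H : ℕ} (h : ℕ) (hh : h < H) (o : Fin O) (a : Fin A)
    (G : (Fin H → Fin O) × (Fin H → Fin A) → ℝ) (hG : ∀ t, 0 ≤ G t) :
    ∑ t, G (updP h o a t) ≤ (O * A : ℝ) * ∑ t, G t := by
  rw [Fintype.sum_prod_type, Fintype.sum_prod_type]
  simp only [updP]
  have h1 := sum_upd_le hh o (fun x => ∑ y, G (x, upd h a y))
    (fun x => Finset.sum_nonneg fun y _ => hG _)
  have h2 : ∀ x, ∑ y, G (x, upd h a y) ≤ (A : ℝ) * ∑ y, G (x, y) := by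
    intro x
    simpa using sum_upd_le hh a (fun y => G (x, y)) (fun y => hG _)
  refine h1.trans ?_
  rw [mul_assoc, Fintype.card_fin]
  gcongr
  rw [Finset.mul_sum]
  exact Finset.sum_le_sum fun x _ => h2 x

lemma sum_update_total {O A H : ℕ} (hO : 0 < O) (hA : 0 < A)
    (p : (Fin H → Fin O) → (Fin H → Fin A) → ℝ)
    (hcausal : ∀ h ≤ H, ∀ (o : ℕ → Fin O) (a a' : ℕ → Fin A),
      (∀ i, i < h → a i = a' i) → marg p h o a = marg p h o a')
    (h : ℕ) (hh : h < H) (a : Fin A) (y : (Fin H → Fin O) × (Fin H → Fin A) → ℝ) :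
    ∑ o : Fin O, ∑ t, (sysDyn p h *ᵥ y) (updP h o a t) = O * ∑ t, (sysDyn p h *ᵥ y) t := by
  simp only [Matrix.mulVec, dotProduct, sysDyn_upd]
  have e1 : ∀ o : Fin O, ∑ t, ∑ τ, sysDyn p (h + 1) t (updP h o a τ) * y τ =
      ∑ τ, ((A : ℝ) ^ H * (O : ℝ) ^ (h + 1)) * margF p (h + 1) (upd h o τ.1) (upd h a τ.2) * y τ := by
    intro o
    rw [Finset.sum_comm]
    refine Finset.sum_congr rfl fun τ _ => ?_
    rw [← Finset.sum_mul, sum_col hO hA p hcausal (h + 1) hh]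
    rfl
  have e2 : ∑ t, ∑ τ, sysDyn p h t τ * y τ =
      ∑ τ, ((A : ℝ) ^ H * (O : ℝ) ^ h) * margF p h τ.1 τ.2 * y τ := by
    rw [Finset.sum_comm]
    refine Finset.sum_congr rfl fun τ _ => ?_
    rw [← Finset.sum_mul, sum_col hO hA p hcausal h hh.le]
  simp only [e1]
  rw [e2, Finset.sum_comm, Finset.mul_sum]
  refine Finset.sum_congr rfl fun τ _ => ?_
  rw [← Finset.sum_mul, ← Finset.mul_sum, sum_margF p h hh,
    margF_causal hO hA p hcausal h hh.le τ.1 (upd h a τ.2) τ.2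
      (by intro i hi; rw [upd, if_neg (by omega)])]
  ring

lemma exists_basis {ι : Type*} [Fintype ι] [DecidableEq ι] (D : Matrix ι ι ℝ) (r : ℕ)
    (hr : D.rank = r) :
    ∃ e : Fin r → ι → ℝ, (∀ i, ∃ y, e i = D *ᵥ y) ∧
      (∀ x : Fin r → ℝ, ∑ t, (∑ i, x i * e i t) ^ 2 = ∑ i, x i ^ 2) ∧
      (∀ y t, (D *ᵥ y) t = ∑ i, (∑ s, e i s * (D *ᵥ y) s) * e i t) ∧
      (∀ g : ι → ℝ, ∑ i, (∑ s, e i s * g s) ^ 2 ≤ ∑ s, g s ^ 2) := by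
  let L := (WithLp.linearEquiv 2 ℝ (ι → ℝ)).symm
  let W : Submodule ℝ (EuclideanSpace ℝ ι) := (LinearMap.range D.mulVecLin).map L.toLinearMap
  have hW : Module.finrank ℝ W = r := by
    rw [← hr, Matrix.rank]
    exact LinearEquiv.finrank_map_eq L _
  let b := (stdOrthonormalBasis ℝ W).reindex (finCongr hW)
  have hon : Orthonormal ℝ (fun i => (b i : EuclideanSpace ℝ ι)) :=
    b.orthonormal.comp_linearIsometry W.subtypeₗᵢ
  have hin : ∀ (u v : EuclideanSpace ℝ ι), inner ℝ u v = ∑ s, u s * v s := by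
    intro u v
    simp [PiLp.inner_apply, mul_comm]
  have hno : ∀ (u : EuclideanSpace ℝ ι), ‖u‖ ^ 2 = ∑ s, u s ^ 2 := by
    intro u
    simp [EuclideanSpace.norm_sq_eq]
  refine ⟨fun i t => (b i : EuclideanSpace ℝ ι) t, ?_, ?_, ?_, ?_⟩
  · intro i
    obtain ⟨_, ⟨y, rfl⟩, h2⟩ := (b i).2
    refine ⟨y, ?_⟩
    funext t
    change (b i : EuclideanSpace ℝ ι) t = _
    rw [← h2]
    rfl
  · intro x
    have h1 := hno (∑ i, x i • (b i : EuclideanSpace ℝ ι))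
    have h2 := hon.inner_sum x x Finset.univ
    rw [real_inner_self_eq_norm_sq, h1] at h2
    simpa [pow_two] using h2
  · intro y t
    let w : W := ⟨L (D *ᵥ y), ⟨_, ⟨y, rfl⟩, rfl⟩⟩
    have h1 := b.sum_repr' w
    have h2 := congrArg (fun z : W => (z : EuclideanSpace ℝ ι) t) h1
    simp only [Submodule.coe_inner, hin, Submodule.coe_sum, Submodule.coe_smul] at h2
    simp only [WithLp.ofLp_sum, Finset.sum_apply, WithLp.ofLp_smul, Pi.smul_apply, smul_eq_mul] at h2
    exact h2.symm
  · intro g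
    have h1 := hon.sum_inner_products_le (WithLp.toLp 2 g) (s := Finset.univ)
    simpa [hin, hno] using h1

/-- Self-consistent OOM representation: every sequential decision making problem with
`rank(D_h) = r_h` admits operators `b₀`, `B_h(o,a) ∈ ℝ^{r_h × r_{h-1}}`, `υ_h ∈ ℝ^{r_h}`
with `|b₀| ≤ √(A^H)`, `‖B_h(o,a)‖₂ ≤ 1`, `‖υ_h‖₂ ≤ √((O/A)^{H−h})`, satisfying
`υ_hᵀ Σ_o B_h(o,a) = υ_{h-1}ᵀ` and `P(o_{1:h}|a_{1:h}) = υ_hᵀ B_h(o_h,a_h)⋯B_1(o_1,a_1) b₀`. -/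
theorem oom_representation {O A H : ℕ} (hO : 0 < O) (hA : 0 < A)
    (p : (Fin H → Fin O) → (Fin H → Fin A) → ℝ)
    (hpos : ∀ o a, 0 ≤ p o a)
    (hnorm : ∀ a, ∑ o, p o a = 1)
    (hcausal : ∀ h ≤ H, ∀ (o : ℕ → Fin O) (a a' : ℕ → Fin A),
      (∀ i, i < h → a i = a' i) → marg p h o a = marg p h o a')
    (r : ℕ → ℕ) (hrank : ∀ h ≤ H, (sysDyn p h).rank = r h) :
    ∃ (b₀ : ℝ) (B : (h : ℕ) → Fin O → Fin A → Matrix (Fin (r (h + 1))) (Fin (r h)) ℝ)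
      (υ : (h : ℕ) → Fin (r h) → ℝ),
      b₀ ^ 2 ≤ (A : ℝ) ^ H ∧
      (∀ h < H, ∀ (o : Fin O) (a : Fin A) (x : Fin (r h) → ℝ),
        ∑ i, ((B h o a).mulVec x i) ^ 2 ≤ ∑ j, x j ^ 2) ∧
      (∀ h ≤ H, ∑ i, υ h i ^ 2 ≤ ((O : ℝ) / A) ^ (H - h)) ∧
      (∀ h < H, ∀ a : Fin A, (∑ o : Fin O, B h o a).vecMul (υ (h + 1)) = υ h) ∧
      (∀ h ≤ H, ∀ (o : ℕ → Fin O) (a : ℕ → Fin A),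
        marg p h o a = ∑ i, υ h i * chain r B b₀ o a h i) := by
  have hb : ∀ h, ∃ e : Fin (r h) → (Fin H → Fin O) × (Fin H → Fin A) → ℝ, h ≤ H →
      (∀ i, ∃ y, e i = sysDyn p h *ᵥ y) ∧
      (∀ x : Fin (r h) → ℝ, ∑ t, (∑ i, x i * e i t) ^ 2 = ∑ i, x i ^ 2) ∧
      (∀ y t, (sysDyn p h *ᵥ y) t = ∑ i, (∑ s, e i s * (sysDyn p h *ᵥ y) s) * e i t) ∧
      (∀ g : _ → ℝ, ∑ i, (∑ s, e i s * g s) ^ 2 ≤ ∑ s, g s ^ 2) := by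
    intro h
    by_cases hh : h ≤ H
    · obtain ⟨e, he⟩ := exists_basis (sysDyn p h) (r h) (hrank h hh)
      exact ⟨e, fun _ => he⟩
    · exact ⟨0, fun h' => absurd h' hh⟩
  choose e he using hb
  have hO' : (0 : ℝ) < O := by exact_mod_cast hO
  have hA' : (0 : ℝ) < A := by exact_mod_cast hA
  obtain ⟨c, hc0, hc2⟩ : ∃ c : ℝ, 0 < c ∧ c ^ 2 = O * A :=
    ⟨Real.sqrt (O * A), Real.sqrt_pos.mpr (by positivity), Real.sq_sqrt (by positivity)⟩
  have hp1 : ∀ o a, p o a ≤ 1 := by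
    intro o a
    rw [← hnorm a]
    exact Finset.single_le_sum (f := fun o => p o a) (fun o _ => hpos o a) (Finset.mem_univ o)
  let τ₀ : (Fin H → Fin O) × (Fin H → Fin A) := (fun _ => ⟨0, hO⟩, fun _ => ⟨0, hA⟩)
  have hcol : ∀ h (τ : (Fin H → Fin O) × (Fin H → Fin A)) t,
      sysDyn p h t τ = (sysDyn p h *ᵥ Pi.single τ 1) t := by
    intro h τ t
    rw [Matrix.mulVec_single_one, Matrix.col_apply]
  have hcol0 : ∀ τ t, sysDyn p 0 t τ = p t.1 t.2 := by
    intro τ t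
    simp [sysDyn, splice_zero]
  have hr0 : r 0 ≤ 1 := by
    rw [← hrank 0 (Nat.zero_le _)]
    have : sysDyn p 0 = Matrix.vecMulVec (fun t => p t.1 t.2) 1 := by
      ext t τ
      simp [hcol0, Matrix.vecMulVec_apply]
    rw [this]
    exact Matrix.rank_vecMulVec_le _ _
  have hsub : Subsingleton (Fin (r 0)) := Fin.subsingleton_iff_le_one.mpr hr0
  let B : (h : ℕ) → Fin O → Fin A → Matrix (Fin (r (h + 1))) (Fin (r h)) ℝ :=
    fun h o a => Matrix.of fun i j => c⁻¹ * ∑ s, e (h + 1) i s * e h j (updP h o a s)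
  have hBv : ∀ h o a (x : Fin (r h) → ℝ) i, (B h o a *ᵥ x) i =
      c⁻¹ * ∑ s, e (h + 1) i s * ∑ j, x j * e h j (updP h o a s) := by
    intro h o a x i
    simp only [B, Matrix.mulVec, dotProduct, Matrix.of_apply, Finset.mul_sum, Finset.sum_mul]
    rw [Finset.sum_comm]
    refine Finset.sum_congr rfl fun s _ => Finset.sum_congr rfl fun j _ => ?_
    ring
  let υ : (h : ℕ) → Fin (r h) → ℝ :=
    fun h i => ((A : ℝ) ^ (H - h))⁻¹ * (c ^ h)⁻¹ * ∑ s, e h i s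
  let b₀ : ℝ := ∑ i, ∑ s, e 0 i s * sysDyn p 0 s τ₀
  have hchain : ∀ h ≤ H, ∀ (o : ℕ → Fin O) (a : ℕ → Fin A) i, chain r B b₀ o a h i =
      (c ^ h)⁻¹ * ∑ s, e h i s * sysDyn p h s (fun i => o i, fun i => a i) := by
    intro h
    induction h with
    | zero =>
      intro _ o a i
      simp only [chain, b₀, hcol0, pow_zero, inv_one, one_mul]
      exact Fintype.sum_subsingleton _ i
    | succ h ih =>
      intro hh o a i
      have hh' : h ≤ H := by omega
      obtain ⟨-, -, he3, -⟩ := he h hh'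
      rw [chain, hBv]
      simp only [ih hh' o a]
      have hu : updP h (o h) (a h) ((fun i : Fin H => o i), (fun i : Fin H => a i)) =
          ((fun i : Fin H => o i), (fun i : Fin H => a i)) := by
        simp only [updP, Prod.mk.injEq]
        constructor <;>
        · funext i
          simp only [upd]
          split_ifs with h'
          · rw [h']
          · rfl
      have key : ∀ s, ∑ j, ((c ^ h)⁻¹ * ∑ s, e h j s * sysDyn p h s (fun i => o i, fun i => a i)) *
          e h j (updP h (o h) (a h) s) =
          (c ^ h)⁻¹ * sysDyn p (h + 1) s (fun i => o i, fun i => a i) := by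
        intro s
        have h1 := he3 (Pi.single (fun i => o i, fun i => a i) 1) (updP h (o h) (a h) s)
        simp only [← hcol] at h1
        rw [sysDyn_upd, hu] at h1
        rw [h1, Finset.mul_sum]
        exact Finset.sum_congr rfl fun j _ => by ring
      simp only [key]
      rw [pow_succ, mul_inv, mul_comm (c ^ h)⁻¹, mul_assoc, Finset.mul_sum (a := (c ^ h)⁻¹)]
      congr 1
      exact Finset.sum_congr rfl fun s _ => by ring
  refine ⟨b₀, B, υ, ?_, ?_, ?_, ?_, ?_⟩
  · obtain ⟨-, -, -, he4⟩ := he 0 (Nat.zero_le _)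
    have h1 : b₀ ^ 2 = ∑ i, (∑ s, e 0 i s * sysDyn p 0 s τ₀) ^ 2 := by
      rcases isEmpty_or_nonempty (Fin (r 0)) with hE | ⟨⟨i⟩⟩
      · simp [b₀]
      · rw [Fintype.sum_subsingleton _ i]
        simp only [b₀]
        rw [Fintype.sum_subsingleton _ i]
    rw [h1]
    refine (he4 _).trans ?_
    simp only [hcol0]
    rw [Fintype.sum_prod_type_right]
    calc ∑ y, ∑ x, p x y ^ 2 ≤ ∑ y : Fin H → Fin A, ∑ x, p x y := by
          refine Finset.sum_le_sum fun y _ => Finset.sum_le_sum fun x _ => ?_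
          nlinarith [hpos x y, hp1 x y]
      _ = (A : ℝ) ^ H := by simp [hnorm]
  · intro h hh o a x
    obtain ⟨-, he2, -, -⟩ := he h hh.le
    obtain ⟨-, -, -, he4⟩ := he (h + 1) hh
    simp only [hBv, mul_pow]
    rw [← Finset.mul_sum]
    have h1 := he4 (fun s => ∑ j, x j * e h j (updP h o a s))
    have h2 := sum_updP_le h hh o a (fun s => (∑ j, x j * e h j s) ^ 2) (fun _ => sq_nonneg _)
    rw [he2 x, ← hc2] at h2
    rw [inv_pow, inv_mul_le_iff₀ (by positivity)]
    exact h1.trans h2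
  · intro h hh
    obtain ⟨-, -, -, he4⟩ := he h hh
    have h1 := he4 (fun _ => 1)
    simp only [mul_one] at h1
    simp only [υ, mul_pow]
    rw [← Finset.mul_sum]
    refine (mul_le_mul_of_nonneg_left h1 (by positivity)).trans (le_of_eq ?_)
    obtain ⟨k, rfl⟩ := Nat.exists_eq_add_of_le hh
    have hck : (c ^ h) ^ 2 = (O : ℝ) ^ h * (A : ℝ) ^ h := by
      rw [← pow_mul, mul_comm, pow_mul, hc2, mul_pow]
    simp only [inv_pow, hck, Nat.add_sub_cancel_left, one_pow, Finset.sum_const,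
      Finset.card_univ, Fintype.card_prod, Fintype.card_fun, Fintype.card_fin, nsmul_eq_mul]
    push_cast
    rw [pow_add, pow_add, div_pow]
    field_simp
  · intro h hh a
    obtain ⟨he1, -, -, -⟩ := he h hh.le
    obtain ⟨-, -, he3, -⟩ := he (h + 1) hh
    funext j
    obtain ⟨y, hy⟩ := he1 j
    have ht := sum_update_total hO hA p hcausal h hh a y
    rw [← hy] at ht
    have h1 : ∀ o, ∑ i, (∑ s, e (h + 1) i s) * (∑ s, e (h + 1) i s * e h j (updP h o a s)) =
        ∑ t, e h j (updP h o a t) := by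
      intro o
      obtain ⟨z, hz⟩ := range_upd p h o a y
      rw [← hy] at hz
      have hz' : ∀ t, e h j (updP h o a t) = (sysDyn p (h + 1) *ᵥ z) t := fun t => congrFun hz t
      simp only [hz']
      rw [Finset.sum_congr rfl (fun t _ => he3 z t), Finset.sum_comm]
      refine Finset.sum_congr rfl fun i _ => ?_
      rw [← Finset.mul_sum, mul_comm]
    have h2 : ((∑ o : Fin O, B h o a).vecMul (υ (h + 1))) j =
        ((A : ℝ) ^ (H - (h + 1)))⁻¹ * (c ^ (h + 1))⁻¹ * c⁻¹ *
          ∑ o : Fin O, ∑ t, e h j (updP h o a t) := by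
      simp only [← h1]
      simp only [Matrix.vecMul, dotProduct, Matrix.sum_apply, B, Matrix.of_apply, υ]
      rw [Finset.sum_comm, Finset.mul_sum]
      refine Finset.sum_congr rfl fun i _ => ?_
      rw [Finset.mul_sum (a := ((A : ℝ) ^ (H - (h + 1)))⁻¹ * (c ^ (h + 1))⁻¹ * ∑ s, e (h + 1) i s),
        Finset.mul_sum (s := (Finset.univ : Finset (Fin O)))]
      exact Finset.sum_congr rfl fun o _ => by ring
    rw [h2, ht]
    simp only [υ]
    obtain ⟨k, rfl⟩ := Nat.exists_eq_add_of_lt hh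
    have e1 : h + k + 1 - (h + 1) = k := by omega
    have e2 : h + k + 1 - h = k + 1 := by omega
    rw [e1, e2]
    have e3 : (c ^ (h + 1))⁻¹ * c⁻¹ = (c ^ h)⁻¹ * ((O : ℝ) * A)⁻¹ := by
      rw [← hc2, ← mul_inv, ← mul_inv]
      congr 1
      ring
    rw [mul_assoc (((A : ℝ) ^ k)⁻¹), e3]
    field_simp
    ring
  · intro h hh o a
    obtain ⟨-, -, he3, -⟩ := he h hh
    simp only [hchain h hh, υ]
    have h1 := sum_col hO hA p hcausal h hh (fun i => o i, fun i => a i)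
    have h2 : marg p h o a = margF p h (fun i => o i) (fun i => a i) := rfl
    rw [h2]
    have h3 : ∑ i, (∑ s, e h i s) * (∑ s, e h i s * sysDyn p h s (fun i => o i, fun i => a i)) =
        ∑ t, sysDyn p h t (fun i => o i, fun i => a i) := by
      simp only [hcol]
      rw [Finset.sum_congr rfl (fun t _ => he3 _ t), Finset.sum_comm]
      refine Finset.sum_congr rfl fun i _ => ?_
      rw [← Finset.mul_sum, mul_comm]
    have h4 : ∑ i, ((A : ℝ) ^ (H - h))⁻¹ * (c ^ h)⁻¹ * (∑ s, e h i s) *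
        ((c ^ h)⁻¹ * ∑ s, e h i s * sysDyn p h s (fun i => o i, fun i => a i)) =
        ((A : ℝ) ^ (H - h))⁻¹ * ((c ^ h) ^ 2)⁻¹ *
          ∑ t, sysDyn p h t (fun i => o i, fun i => a i) := by
      rw [← h3, Finset.mul_sum]
      refine Finset.sum_congr rfl fun i _ => ?_
      rw [sq, mul_inv]
      ring
    rw [h4, h1]
    obtain ⟨k, rfl⟩ := Nat.exists_eq_add_of_le hh
    have hck : (c ^ h) ^ 2 = (O : ℝ) ^ h * (A : ℝ) ^ h := by
      rw [← pow_mul, mul_comm, pow_mul, hc2, mul_pow]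
    rw [hck, Nat.add_sub_cancel_left, pow_add]
    field_simp
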